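/- arXiv:1311.4836 — 6 statements merged into one kernel-verified Lean document; each statement's English description precedes it below -/
import Mathlib

section
/- Let h ≥ 1, let A, B : (Fin h → ℕ+) → [0,∞] and let x_1, …, x_h be real numbers with 0 ≤ x_i < 1. Then, as an identity of sums in the extended nonnegative reals, Σ_{n ∈ (ℕ+)^h} (A ⋆ B)(n)·∏_{i=1}^h x_i^{n_i} = Σ_{n ∈ (ℕ+)^h} A(n)·S_B(x_1^{n_1}, …, x_h^{n_h}), where S_B(y_1,…,y_h) = Σ_{p ∈ (ℕ+)^h} B(p)·∏_{i=1}^h y_i^{p_i} is the ordinary generating function of B. -/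
/-!
Both sides equal the sum of `A m * B p * ∏ i, x i ^ (m i * p i)` over all pairs `(m, p)`.
The left side groups the pairs by their product `n = m * p` (`Equiv.sigmaFiberEquiv`), the right
side sums over `p` for each fixed `m`. Sums in `ℝ≥0∞` may be regrouped freely.
-/

open scoped ENNReal

/-- The multivariate convolution product on functions `(Fin h → ℕ+) → ℝ≥0∞`. -/
noncomputable def convE {h : ℕ} (A B : (Fin h → ℕ+) → ℝ≥0∞) (n : Fin h → ℕ+) : ℝ≥0∞ :=
  ∑' mp : {mp : (Fin h → ℕ+) × (Fin h → ℕ+) // mp.1 * mp.2 = n}, A mp.1.1 * B mp.1.2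

/-- The ordinary generating function `S_B(y) = Σ_p B(p) ∏_i y_i^{p_i}` of
`B : (Fin h → ℕ+) → ℝ≥0∞`. -/
noncomputable def ogf {h : ℕ} (B : (Fin h → ℕ+) → ℝ≥0∞) (y : Fin h → ℝ≥0∞) : ℝ≥0∞ :=
  ∑' p : Fin h → ℕ+, B p * ∏ i, y i ^ ((p i : ℕ))

theorem ogf_of_convolution (h : ℕ) (hh : 1 ≤ h)
    (A B : (Fin h → ℕ+) → ℝ≥0∞) (x : Fin h → ℝ)
    (hx0 : ∀ i, 0 ≤ x i) (hx1 : ∀ i, x i < 1) :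
    ∑' n : Fin h → ℕ+, convE A B n * ∏ i, ENNReal.ofReal (x i) ^ ((n i : ℕ)) =
    ∑' n : Fin h → ℕ+, A n * ogf B (fun i => ENNReal.ofReal (x i) ^ ((n i : ℕ))) := by
  have hL : ∀ n : Fin h → ℕ+, convE A B n * ∏ i, ENNReal.ofReal (x i) ^ ((n i : ℕ)) =
      ∑' mp : {mp : (Fin h → ℕ+) × (Fin h → ℕ+) // mp.1 * mp.2 = n},
        A mp.1.1 * (B mp.1.2 *
          ∏ i, (ENNReal.ofReal (x i) ^ ((mp.1.1 i : ℕ))) ^ ((mp.1.2 i : ℕ))) := by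
    intro n
    rw [convE, ← ENNReal.tsum_mul_right]
    refine tsum_congr ?_
    rintro ⟨⟨m, p⟩, rfl⟩
    simp only [Pi.mul_apply, PNat.mul_coe, pow_mul, mul_assoc]
  simp only [hL, ogf, ← ENNReal.tsum_mul_left]
  rw [← ENNReal.tsum_prod]
  let e := Equiv.sigmaFiberEquiv (fun mp : (Fin h → ℕ+) × (Fin h → ℕ+) => mp.1 * mp.2)
  let F : (Fin h → ℕ+) × (Fin h → ℕ+) → ℝ≥0∞ := fun mp => A mp.1 * (B mp.2 *
    ∏ i, (ENNReal.ofReal (x i) ^ ((mp.1 i : ℕ))) ^ ((mp.2 i : ℕ)))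
  exact (ENNReal.tsum_sigma' (fun s => F (e s))).symm.trans (e.tsum_eq F)
end

section
/- Let h ≥ 1 and let △ : (Fin h → ℕ+) → ℤ be the indicator function of weakly decreasing tuples. There exists a unique function U : (Fin h → ℕ+) → ℤ supported on weakly decreasing tuples such that U ⋆ △ = 𝟙, where 𝟙 is the indicator of the all-ones tuple (1, …, 1); equivalently, U is the unique function on weakly decreasing tuples satisfying U(1,…,1) = 1 and, for every weakly decreasing tuple n ≠ (1,…,1), Σ_{m ≼ n} U(m) = 0. (Its values are the Möbius function values μ^h((1,…,1), n) of the poset (weakly decreasing tuples, ≼), so that the Dirichlet series of U is the inverse of the large multizeta function Z.) -/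
/-!
Since `△(1) = 1`, the pair `(n, 1)` contributes exactly `U n` to `(U ⋆ △)(n)` (`convZ_triZ_eq`), and every
other divisor pair `(m, p)` has `m < n` (`fst_lt_of_mem_properPairs`). So `U ⋆ △ = 𝟙` is a recursion
for `U` along the well-founded product order on `Fin h → ℕ+`, with exactly one solution.
This solution vanishes off the weakly decreasing tuples, by induction: if `n` is not weakly
decreasing and `n = m * p` with `m ≠ n`, then `m` and `p` cannot both be weakly decreasing, so
either `U m = 0` or `△ p = 0`; hence the recursion reduces to `U n = 𝟙 n = 0`.
-/

/-- The multivariate convolution product on functions `(Fin h → ℕ+) → ℤ`. -/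
noncomputable def convZ {h : ℕ} (A B : (Fin h → ℕ+) → ℤ) (n : Fin h → ℕ+) : ℤ :=
  ∑ᶠ (mp : (Fin h → ℕ+) × (Fin h → ℕ+)) (_ : mp.1 * mp.2 = n), A mp.1 * B mp.2

/-- The indicator function `△` of the set of weakly decreasing tuples. -/
noncomputable def triZ (h : ℕ) : (Fin h → ℕ+) → ℤ :=
  Set.indicator {n | Antitone n} 1

/-- The indicator function `𝟙` of the all-ones tuple. -/
noncomputable def oneZ (h : ℕ) : (Fin h → ℕ+) → ℤ := fun n => if n = 1 then 1 else 0

/-- The divisor pairs `(m, p)` with `m * p = n`, except for `(n, 1)`. -/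
noncomputable def properPairs {h : ℕ} (n : Fin h → ℕ+) :
    Finset ((Fin h → ℕ+) × (Fin h → ℕ+)) :=
  ((Finset.Icc 1 n ×ˢ Finset.Icc 1 n).filter (fun mp => mp.1 * mp.2 = n)).erase (n, 1)

lemma mul_eq_of_mem_properPairs {h : ℕ} {n : Fin h → ℕ+} {mp : (Fin h → ℕ+) × (Fin h → ℕ+)}
    (hmp : mp ∈ properPairs n) : mp.1 * mp.2 = n := by
  simp only [properPairs, Finset.mem_erase, Finset.mem_filter] at hmp
  exact hmp.2.2

lemma fst_lt_of_mem_properPairs {h : ℕ} {n : Fin h → ℕ+} {mp : (Fin h → ℕ+) × (Fin h → ℕ+)}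
    (hmp : mp ∈ properPairs n) : mp.1 < n := by
  have hmul := mul_eq_of_mem_properPairs hmp
  simp only [properPairs, Finset.mem_erase, Finset.mem_filter, Finset.mem_product,
    Finset.mem_Icc] at hmp
  refine lt_of_le_of_ne hmp.2.1.1.2 fun heq => hmp.1 (Prod.ext heq ?_)
  rw [heq] at hmul
  exact mul_eq_left.mp hmul

/-- The convolution with `△`, with the term of the pair `(n, 1)` split off. -/
lemma convZ_triZ_eq {h : ℕ} (U : (Fin h → ℕ+) → ℤ) (n : Fin h → ℕ+) :
    convZ U (triZ h) n = U n + ∑ mp ∈ properPairs n, U mp.1 * triZ h mp.2 := by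
  have hone : ∀ a : Fin h → ℕ+, 1 ≤ a := fun a i => one_le
  have hsum : convZ U (triZ h) n =
      ∑ mp ∈ (Finset.Icc 1 n ×ˢ Finset.Icc 1 n).filter (fun mp => mp.1 * mp.2 = n),
        U mp.1 * triZ h mp.2 := by
    unfold convZ
    rw [← finsum_mem_coe_finset]
    refine finsum_congr fun mp => finsum_congr_Prop (propext ?_) fun _ => rfl
    simp only [Finset.coe_filter, Set.mem_ofPred_eq, Finset.mem_product, Finset.mem_Icc]
    refine ⟨?_, fun hmp => hmp.2⟩
    rintro rfl
    exact ⟨⟨⟨hone _, fun i => le_mul_of_one_le_right' (hone mp.2 i)⟩,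
      ⟨hone _, fun i => le_mul_of_one_le_left' (hone mp.1 i)⟩⟩, rfl⟩
  have htri : triZ h 1 = 1 := by
    have hanti : Antitone (1 : Fin h → ℕ+) := antitone_const
    simp [triZ, Set.indicator, hanti]
  rw [hsum, properPairs, ← Finset.add_sum_erase _ _ (a := (n, 1)), htri, mul_one]
  simp [hone n]

theorem exists_unique_moebius_inverse (h : ℕ) (hh : 1 ≤ h) :
    ∃! U : (Fin h → ℕ+) → ℤ,
      (∀ n : Fin h → ℕ+, ¬ Antitone n → U n = 0) ∧ convZ U (triZ h) = oneZ h := by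
  have hwf : WellFounded (fun a b : Fin h → ℕ+ => a < b) := wellFounded_lt
  let F : (n : Fin h → ℕ+) → ((m : Fin h → ℕ+) → m < n → ℤ) → ℤ := fun n rec =>
    oneZ h n - ∑ mp ∈ (properPairs n).attach,
      rec mp.1.1 (fst_lt_of_mem_properPairs mp.2) * triZ h mp.1.2
  let U : (Fin h → ℕ+) → ℤ := hwf.fix F
  have hU : ∀ n, U n = oneZ h n - ∑ mp ∈ properPairs n, U mp.1 * triZ h mp.2 := fun n => by
    rw [← Finset.sum_attach (properPairs n)]
    exact hwf.fix_eq F n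
  refine ⟨U, ⟨fun n => ?_, funext fun n => ?_⟩, ?_⟩
  · induction n using hwf.induction with
    | _ n ih =>
      intro hn
      have hn1 : n ≠ 1 := by
        rintro rfl
        exact hn antitone_const
      rw [hU, Finset.sum_eq_zero, oneZ, if_neg hn1, sub_zero]
      intro mp hmp
      by_cases hm : Antitone mp.1
      · have hp : ¬ Antitone mp.2 := fun hp =>
          hn (mul_eq_of_mem_properPairs hmp ▸ fun i j hij => mul_le_mul' (hm hij) (hp hij))
        simp [triZ, hp]
      · rw [ih _ (fst_lt_of_mem_properPairs hmp) hm, zero_mul]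
  · rw [convZ_triZ_eq, hU n, sub_add_cancel]
  · rintro V ⟨-, hV⟩
    funext n
    induction n using hwf.induction with
    | _ n ih =>
      have hVn := congrFun hV n
      rw [convZ_triZ_eq] at hVn
      rw [hU n, ← hVn, eq_sub_iff_add_eq]
      congr 1
      exact Finset.sum_congr rfl fun mp hmp => by rw [ih _ (fst_lt_of_mem_properPairs hmp)]
end

section
/- Let h ≥ 1 and let x_1, …, x_h be complex numbers with |x_i| < 1 for all i. Then the series Σ_{n_1 ≥ n_2 ≥ … ≥ n_h ≥ 1} x_1^{n_1} x_2^{n_2} ⋯ x_h^{n_h}, taken over all weakly decreasing tuples of positive integers, converges absolutely and equals (x_1 x_2 ⋯ x_h) / ((1 − x_1)(1 − x_1 x_2) ⋯ (1 − x_1 x_2 ⋯ x_h)). -/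
/-!
The proof is by induction on `h`, peeling off the last entry. A weakly decreasing tuple
`(n_1, …, n_{h+1})` of positive integers is uniquely of the form
`(m_1 + k, …, m_h + k, 1 + k)` with `k ≥ 0` and `m` a weakly decreasing tuple of positive integers
(`extend_bijective`), and its monomial is `x^m · (x_{h+1} · (x_1 ⋯ x_{h+1})^k)`
(`prod_pow_extend`). Hence the series for `h + 1` is the product of the series for `h` with a
geometric series of ratio `x_1 ⋯ x_{h+1}`, which contributes the new factor
`x_{h+1} / (1 - x_1 ⋯ x_{h+1})`.
-/

namespace GenfunOfTriangle

/-- Adds `k` to every entry of the tuple `m` and appends the last entry `1 + k`. The sum `m i + k`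
is written `(m i - 1) + k + 1`, so that it is visibly positive. -/
def extendFun {h : ℕ} (m : Fin h → ℕ+) (k : ℕ) : Fin (h + 1) → ℕ+ :=
  Fin.snoc (α := fun _ => ℕ+) (fun i => ((m i).natPred + k).succPNat) k.succPNat

lemma extendFun_castSucc {h : ℕ} (m : Fin h → ℕ+) (k : ℕ) (i : Fin h) :
    (extendFun m k i.castSucc : ℕ) = m i + k := by
  have := (m i).natPred_add_one
  rw [extendFun, Fin.snoc_castSucc (α := fun _ => ℕ+), Nat.succPNat_coe]
  omega

lemma extendFun_last {h : ℕ} (m : Fin h → ℕ+) (k : ℕ) :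
    (extendFun m k (Fin.last h) : ℕ) = k + 1 := by
  rw [extendFun, Fin.snoc_last (α := fun _ => ℕ+), Nat.succPNat_coe]

lemma extendFun_antitone {h : ℕ} {m : Fin h → ℕ+} (hm : Antitone m) (k : ℕ) :
    Antitone (extendFun m k) := by
  intro i j hij
  refine PNat.coe_le_coe _ _ |>.1 ?_
  induction j using Fin.lastCases with
  | last =>
    induction i using Fin.lastCases with
    | last => exact le_rfl
    | cast i =>
      have := (m i).pos
      rw [extendFun_last, extendFun_castSucc]
      omega
  | cast j =>
    induction i using Fin.lastCases with
    | last => exact absurd hij (by simp)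
    | cast i =>
      have : (m j : ℕ) ≤ m i := hm (by simpa using hij)
      rw [extendFun_castSucc, extendFun_castSucc]
      omega

/-- `extendFun` as a map on weakly decreasing tuples. -/
def extend {h : ℕ} (p : {n : Fin h → ℕ+ // Antitone n} × ℕ) :
    {n : Fin (h + 1) → ℕ+ // Antitone n} :=
  ⟨extendFun p.1.1 p.2, extendFun_antitone p.1.2 p.2⟩

lemma extend_castSucc {h : ℕ} (p : {n : Fin h → ℕ+ // Antitone n} × ℕ) (i : Fin h) :
    ((extend p).1 i.castSucc : ℕ) = p.1.1 i + p.2 :=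
  extendFun_castSucc _ _ _

lemma extend_last {h : ℕ} (p : {n : Fin h → ℕ+ // Antitone n} × ℕ) :
    ((extend p).1 (Fin.last h) : ℕ) = p.2 + 1 :=
  extendFun_last _ _

lemma extend_bijective (h : ℕ) : Function.Bijective (extend (h := h)) := by
  constructor
  · intro p q hpq
    have h2 : p.2 = q.2 := by
      have := extend_last p
      rw [hpq, extend_last] at this
      omega
    refine Prod.ext (Subtype.ext (funext fun i => PNat.eq ?_)) h2
    have := extend_castSucc p i
    rw [hpq, extend_castSucc] at this
    omega
  · intro n
    have hle (i : Fin h) : (n.1 (Fin.last h) : ℕ) ≤ n.1 i.castSucc := n.2 (Fin.le_last _)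
    have hpos := (n.1 (Fin.last h)).pos
    refine ⟨⟨⟨fun i => ((n.1 i.castSucc : ℕ) - n.1 (Fin.last h)).succPNat, ?_⟩,
      (n.1 (Fin.last h) : ℕ) - 1⟩, ?_⟩
    · intro i j hij
      have : (n.1 j.castSucc : ℕ) ≤ n.1 i.castSucc := n.2 (by simpa using hij)
      exact Nat.succPNat_le_succPNat.2 (Nat.sub_le_sub_right this _)
    · refine Subtype.ext (funext fun i => PNat.eq ?_)
      induction i using Fin.lastCases with
      | last =>
        rw [extend_last]
        dsimp only
        omega
      | cast i =>
        have := hle i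
        rw [extend_castSucc]
        simp only [Nat.succPNat_coe]
        omega

lemma prod_pow_extend {h : ℕ} (x : Fin (h + 1) → ℂ)
    (p : {n : Fin h → ℕ+ // Antitone n} × ℕ) :
    ∏ i, x i ^ ((extend p).1 i : ℕ) =
      (∏ i : Fin h, x i.castSucc ^ (p.1.1 i : ℕ)) * (x (Fin.last h) * (∏ i, x i) ^ p.2) := by
  simp only [Fin.prod_univ_castSucc, extend_castSucc, extend_last, pow_add, pow_one,
    Finset.prod_mul_distrib, Finset.prod_pow, mul_pow]
  ring

/-- The denominator for `h + 1` variables is the one for the first `h` variables times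
`1 - x_1 ⋯ x_{h+1}`. -/
lemma denom_succ {h : ℕ} (x : Fin (h + 1) → ℂ) :
    ∏ i : Fin (h + 1), (1 - ∏ j ∈ Finset.Iic i, x j) =
      (∏ i : Fin h, (1 - ∏ j ∈ Finset.Iic i, x j.castSucc)) * (1 - ∏ i, x i) := by
  rw [Fin.prod_univ_castSucc]
  congr 1
  · refine Finset.prod_congr rfl fun i _ => ?_
    rw [← Fin.map_castSuccEmb_Iic, Finset.prod_map]
    rfl
  · rw [← Fin.top_eq_last, Finset.Iic_top]

lemma norm_prod_lt_one {h : ℕ} (x : Fin (h + 1) → ℂ) (hx : ∀ i, ‖x i‖ < 1) :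
    ‖∏ i, x i‖ < 1 := by
  rw [Fin.prod_univ_castSucc, norm_mul, norm_prod]
  exact mul_lt_one_of_nonneg_of_lt_one_right
    (Finset.prod_le_one (fun _ _ => norm_nonneg _) fun i _ => (hx _).le) (norm_nonneg _) (hx _)

/-- The identity for every `h`, including `h = 0`, where both sides are `1`. -/
lemma summable_and_tsum (h : ℕ) (x : Fin h → ℂ) (hx : ∀ i, ‖x i‖ < 1) :
    (Summable fun n : {n : Fin h → ℕ+ // Antitone n} => ‖∏ i, x i ^ ((n.1 i : ℕ))‖) ∧
    (∑' n : {n : Fin h → ℕ+ // Antitone n}, ∏ i, x i ^ ((n.1 i : ℕ))) =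
      (∏ i, x i) / ∏ i : Fin h, (1 - ∏ j ∈ Finset.Iic i, x j) := by
  induction h with
  | zero =>
    have : Unique {n : Fin 0 → ℕ+ // Antitone n} :=
      ⟨⟨⟨Fin.elim0, fun i => i.elim0⟩⟩, fun n => Subtype.ext (Subsingleton.elim _ _)⟩
    exact ⟨(hasSum_fintype _).summable, by simp⟩
  | succ h ih =>
    obtain ⟨ihs, iht⟩ := ih (fun i => x i.castSucc) fun i => hx _
    have hq := norm_prod_lt_one x hx
    have hgeo : Summable fun k : ℕ => ‖x (Fin.last h) * (∏ i, x i) ^ k‖ := by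
      simp only [norm_mul, norm_pow]
      exact (summable_geometric_of_lt_one (norm_nonneg _) (by simpa using hq)).mul_left _
    let e := Equiv.ofBijective _ (extend_bijective h)
    constructor
    · rw [← e.summable_iff]
      refine (ihs.mul_norm hgeo).congr fun p => ?_
      exact congrArg norm (prod_pow_extend x p).symm
    · rw [← e.tsum_eq, denom_succ, Fin.prod_univ_castSucc (f := x)]
      refine (tsum_congr (prod_pow_extend x)).trans ?_
      rw [← tsum_mul_tsum_of_summable_norm ihs hgeo, iht, tsum_mul_left,
        tsum_geometric_of_norm_lt_one hq, div_mul_eq_mul_div, ← div_eq_mul_inv,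
        mul_div_assoc', div_div, mul_comm (1 - _),
        Fin.prod_univ_castSucc (f := x)]

end GenfunOfTriangle

theorem genfun_of_triangle (h : ℕ) (hh : 1 ≤ h) (x : Fin h → ℂ) (hx : ∀ i, ‖x i‖ < 1) :
    (Summable fun n : {n : Fin h → ℕ+ // Antitone n} => ‖∏ i, x i ^ ((n.1 i : ℕ))‖) ∧
    (∑' n : {n : Fin h → ℕ+ // Antitone n}, ∏ i, x i ^ ((n.1 i : ℕ))) =
      (∏ i, x i) / ∏ i : Fin h, (1 - ∏ j ∈ Finset.Iic i, x j) := by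
  exact GenfunOfTriangle.summable_and_tsum h x hx
end

section
/- Let h ≥ 1 and let x_1, …, x_h be complex numbers with |x_i| < 1 for all i. Then the series Σ_{n_1 ≥ n_2 ≥ … ≥ n_h ≥ 1} (n_1 − n_2 + 1)(n_2 − n_3 + 1) ⋯ (n_{h−1} − n_h + 1) · x_1^{n_1} x_2^{n_2} ⋯ x_h^{n_h}, taken over all weakly decreasing tuples of positive integers, converges absolutely and equals (x_1 x_2 ⋯ x_h) / ((1 − x_1)^2 (1 − x_1 x_2)^2 ⋯ (1 − x_1 ⋯ x_{h−1})^2 (1 − x_1 ⋯ x_h)). -/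
/-!
The proof is by induction on the number of variables. An antitone tuple `(n₁, n₂, …, n_{h+2})` is
determined by the gap `k = n₁ - n₂ ≥ 0` and the antitone tail `(n₂, …, n_{h+2})`
(`antitoneConsEquiv`), and the summand factors as `(k + 1) x₁ ^ k` times the summand of the tail in
the variables `(x₁ x₂, x₃, …, x_{h+2})` (`summand_cons`). The sum over `k` is `1 / (1 - x₁) ^ 2`
(`gap_series`), and the initial products of the merged variables are the initial products of
length at least two of the original ones (`denominator_succ`), so the closed formula follows from
the product of two absolutely convergent series. The base case `h = 1` is the geometric series.
-/

/-- The weight `(n_1 - n_2 + 1) ⋯ (n_{h-1} - n_h + 1)` of a tuple of positive integers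
(an empty product, equal to `1`, when `h = 1`). -/
def pyrWeight (h : ℕ) (n : Fin h → ℕ+) : ℕ :=
  ∏ i : Fin h,
    if hi : (i : ℕ) + 1 < h then (n i : ℕ) - (n ⟨(i : ℕ) + 1, hi⟩ : ℕ) + 1 else 1

/-- The variables `(x₁ x₂, x₃, …)` obtained from `(x₁, x₂, x₃, …)` by merging the first two. -/
def mergeVars {h : ℕ} (x : Fin (h + 2) → ℂ) : Fin (h + 1) → ℂ :=
  Fin.cons (x 0 * x 1) fun i => x i.succ.succ

/-- The summand of the series at the tuple `n`. -/
noncomputable def summand (h : ℕ) (x : Fin h → ℂ) (n : Fin h → ℕ+) : ℂ :=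
  (pyrWeight h n : ℂ) * ∏ i, x i ^ ((n i : ℕ))

/-- The denominator of the closed formula. -/
noncomputable def denominator (h : ℕ) (x : Fin h → ℂ) : ℂ :=
  ∏ i : Fin h, (1 - ∏ j ∈ Finset.Iic i, x j) ^ (if (i : ℕ) + 1 < h then 2 else 1)

/-- The tuple `(m₁ + k, m₁, m₂, …)`. -/
def consGap {h : ℕ} (k : ℕ) (m : Fin (h + 1) → ℕ+) : Fin (h + 2) → ℕ+ :=
  Fin.cons ⟨m 0 + k, Nat.add_pos_left (m 0).pos k⟩ m

theorem consGap_zero {h : ℕ} (k : ℕ) (m : Fin (h + 1) → ℕ+) :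
    (consGap k m 0 : ℕ) = m 0 + k := rfl

theorem consGap_succ {h : ℕ} (k : ℕ) (m : Fin (h + 1) → ℕ+) (i : Fin (h + 1)) :
    consGap k m i.succ = m i := rfl

theorem consGap_one {h : ℕ} (k : ℕ) (m : Fin (h + 1) → ℕ+) : consGap k m 1 = m 0 := rfl

theorem mergeVars_zero {h : ℕ} (x : Fin (h + 2) → ℂ) : mergeVars x 0 = x 0 * x 1 := rfl

theorem mergeVars_succ {h : ℕ} (x : Fin (h + 2) → ℂ) (i : Fin h) :
    mergeVars x i.succ = x i.succ.succ := rfl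

theorem antitone_consGap {h : ℕ} (k : ℕ) {m : Fin (h + 1) → ℕ+} (hm : Antitone m) :
    Antitone (consGap k m) := by
  rw [Fin.antitone_iff_succ_le] at hm ⊢
  intro i
  refine Fin.cases ?_ (fun j => ?_) i
  · rw [consGap_succ, ← PNat.coe_le_coe, Fin.castSucc_zero, consGap_zero]
    exact Nat.le_add_right _ _
  · exact hm j

/-- Antitone tuples of length `h + 2` correspond to a first gap and an antitone tail. -/
def antitoneConsEquiv (h : ℕ) :
    ℕ × {m : Fin (h + 1) → ℕ+ // Antitone m} ≃ {n : Fin (h + 2) → ℕ+ // Antitone n} where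
  toFun p := ⟨consGap p.1 p.2.1, antitone_consGap p.1 p.2.2⟩
  invFun n := ⟨(n.1 0 : ℕ) - n.1 1, fun i => n.1 i.succ,
    fun _ _ hij => n.2 (Fin.succ_le_succ_iff.mpr hij)⟩
  left_inv p := by
    obtain ⟨k, m, hm⟩ := p
    simp [consGap_zero, consGap_one, consGap_succ]
  right_inv n := by
    obtain ⟨n, hn⟩ := n
    have h10 : (n 1 : ℕ) ≤ n 0 := PNat.coe_le_coe _ _ |>.mpr (hn (Fin.zero_le 1))
    refine Subtype.ext (funext fun i => ?_)
    refine Fin.cases ?_ (fun j => rfl) i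
    exact PNat.eq (Nat.add_sub_of_le h10)

theorem pyrWeight_consGap {h : ℕ} (k : ℕ) (m : Fin (h + 1) → ℕ+) :
    pyrWeight (h + 2) (consGap k m) = (k + 1) * pyrWeight (h + 1) m := by
  unfold pyrWeight
  rw [Fin.prod_univ_succ]
  congr 1
  · simp [consGap_zero, consGap_one]
  · refine Finset.prod_congr rfl fun i _ => ?_
    by_cases hi : (i : ℕ) + 1 < h + 1
    · have hi' : (i.succ : ℕ) + 1 < h + 2 := by simpa using hi
      rw [dif_pos hi, dif_pos hi']
      rfl
    · have hi' : ¬ (i.succ : ℕ) + 1 < h + 2 := by simpa using hi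
      rw [dif_neg hi, dif_neg hi']

theorem summand_cons {h : ℕ} (x : Fin (h + 2) → ℂ) (k : ℕ) (m : Fin (h + 1) → ℕ+) :
    summand (h + 2) x (consGap k m) =
      ((k + 1 : ℂ) * x 0 ^ k) * summand (h + 1) (mergeVars x) m := by
  unfold summand
  rw [pyrWeight_consGap, Fin.prod_univ_succ, Fin.prod_univ_succ, Fin.prod_univ_succ (n := h)]
  simp only [consGap_zero, consGap_one, consGap_succ, mergeVars_zero, mergeVars_succ,
    Fin.succ_zero_eq_one]
  push_cast
  ring

theorem prod_Iic_succ {h : ℕ} (x : Fin (h + 2) → ℂ) (i : Fin (h + 1)) :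
    ∏ j ∈ Finset.Iic i.succ, x j = ∏ j ∈ Finset.Iic i, mergeVars x j := by
  have key : ∀ {N : ℕ} (f : Fin N → ℂ) (a : Fin N),
      ∏ j ∈ Finset.Iic a, f j = ∏ j, if j ≤ a then f j else 1 := by
    intro N f a
    rw [← Finset.prod_filter]
    congr 1
    ext j
    simp
  rw [key, key, Fin.prod_univ_succ, Fin.prod_univ_succ, Fin.prod_univ_succ (n := h)]
  simp only [mergeVars_zero, mergeVars_succ, Fin.succ_le_succ_iff, Fin.zero_le, if_true, mul_assoc]
  rfl

theorem denominator_succ {h : ℕ} (x : Fin (h + 2) → ℂ) :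
    denominator (h + 2) x = (1 - x 0) ^ 2 * denominator (h + 1) (mergeVars x) := by
  unfold denominator
  rw [Fin.prod_univ_succ]
  congr 1
  · have h0 : Finset.Iic (0 : Fin (h + 2)) = {0} := by
      ext j
      simp
    simp [h0]
  · refine Finset.prod_congr rfl fun i _ => ?_
    rw [prod_Iic_succ]
    simp

/-- The sum over the first gap: `∑ (k + 1) z ^ k = 1 / (1 - z) ^ 2`. -/
theorem gap_series {z : ℂ} (hz : ‖z‖ < 1) :
    (Summable fun k : ℕ => ‖(k + 1 : ℂ) * z ^ k‖) ∧
      ∑' k : ℕ, (k + 1 : ℂ) * z ^ k = 1 / (1 - z) ^ 2 := by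
  have hs := hasSum_choose_mul_geometric_of_norm_lt_one 1 hz
  simp only [Nat.choose_one_right, Nat.cast_add, Nat.cast_one, Nat.reduceAdd] at hs
  exact ⟨hs.summable.norm, hs.tsum_eq⟩

/-- The geometric series started at exponent one, indexed by tuples of length one. -/
theorem base_series (x : Fin 1 → ℂ) (hx : ∀ i, ‖x i‖ < 1) :
    (Summable fun n : {n : Fin 1 → ℕ+ // Antitone n} => ‖summand 1 x n.1‖) ∧
      ∑' n : {n : Fin 1 → ℕ+ // Antitone n}, summand 1 x n.1 = (∏ i, x i) / denominator 1 x := by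
  let e : ℕ ≃ {n : Fin 1 → ℕ+ // Antitone n} :=
    (Equiv.pnatEquivNat.symm.trans (Equiv.funUnique (Fin 1) ℕ+).symm).trans
      (Equiv.subtypeUnivEquiv fun n => Subsingleton.antitone n).symm
  have he : ∀ k, summand 1 x (e k).1 = x 0 * x 0 ^ k := by
    intro k
    have : (e k).1 0 = k.succPNat := rfl
    simp [summand, pyrWeight, this, pow_succ']
  have hs : HasSum (fun k : ℕ => x 0 * x 0 ^ k) (x 0 * (1 - x 0)⁻¹) :=
    (hasSum_geometric_of_norm_lt_one (hx 0)).mul_left _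
  have hs' : HasSum (fun n : {n : Fin 1 → ℕ+ // Antitone n} => summand 1 x n.1)
      (x 0 * (1 - x 0)⁻¹) := by
    rw [← e.hasSum_iff]
    simpa only [Function.comp_def, he] using hs
  refine ⟨hs'.summable.norm, ?_⟩
  have h0 : Finset.Iic (0 : Fin 1) = {0} := rfl
  rw [hs'.tsum_eq]
  simp [denominator, h0, div_eq_mul_inv]

theorem series_eq (h : ℕ) (x : Fin (h + 1) → ℂ) (hx : ∀ i, ‖x i‖ < 1) :
    (Summable fun n : {n : Fin (h + 1) → ℕ+ // Antitone n} => ‖summand (h + 1) x n.1‖) ∧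
      ∑' n : {n : Fin (h + 1) → ℕ+ // Antitone n}, summand (h + 1) x n.1 =
        (∏ i, x i) / denominator (h + 1) x := by
  induction h with
  | zero => exact base_series x hx
  | succ h ih =>
    have hmerge : ∀ i, ‖mergeVars x i‖ < 1 := by
      intro i
      refine Fin.cases ?_ (fun j => ?_) i
      · simpa [mergeVars_zero] using
          mul_lt_one_of_nonneg_of_lt_one_left (norm_nonneg _) (hx 0) (hx 1).le
      · simpa [mergeVars_succ] using hx j.succ.succ
    obtain ⟨hsum, htsum⟩ := ih (mergeVars x) hmerge
    obtain ⟨gsum, gtsum⟩ := gap_series (hx 0)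
    have he : ∀ p, summand (h + 2) x (antitoneConsEquiv h p).1 =
        ((p.1 + 1 : ℂ) * x 0 ^ p.1) * summand (h + 1) (mergeVars x) p.2.1 :=
      fun p => summand_cons x p.1 p.2.1
    constructor
    · rw [← (antitoneConsEquiv h).summable_iff]
      simpa only [Function.comp_def, he] using gsum.mul_norm hsum
    · rw [← (antitoneConsEquiv h).tsum_eq]
      simp only [he]
      rw [← tsum_mul_tsum_of_summable_norm gsum hsum, gtsum, htsum, denominator_succ,
        Fin.prod_univ_succ, Fin.prod_univ_succ x, Fin.prod_univ_succ (n := h)]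
      simp only [mergeVars_zero, mergeVars_succ, Fin.succ_zero_eq_one]
      rw [div_mul_div_comm, one_mul, mul_assoc]

theorem genfun_of_black_triangle (h : ℕ) (hh : 1 ≤ h) (x : Fin h → ℂ) (hx : ∀ i, ‖x i‖ < 1) :
    (Summable fun n : {n : Fin h → ℕ+ // Antitone n} =>
      ‖(pyrWeight h n.1 : ℂ) * ∏ i, x i ^ ((n.1 i : ℕ))‖) ∧
    (∑' n : {n : Fin h → ℕ+ // Antitone n}, (pyrWeight h n.1 : ℂ) * ∏ i, x i ^ ((n.1 i : ℕ))) =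
      (∏ i, x i) /
        ∏ i : Fin h, (1 - ∏ j ∈ Finset.Iic i, x j) ^ (if (i : ℕ) + 1 < h then 2 else 1) := by
  obtain ⟨k, rfl⟩ : ∃ k, h = k + 1 := ⟨h - 1, by omega⟩
  exact series_eq k x hx
end

section
/- Let h ≥ 1 and let m_1 ≥ m_2 ≥ … ≥ m_h ≥ 1 be positive integers. The number of espaliers of height h with multivolume (m_1, …, m_h) equals the number of pairs (a, b) of weakly decreasing tuples a, b ∈ (ℕ+)^h such that a_i · b_i = m_i for every i (equivalently, the number of pairs of integer partitions of height h whose componentwise product is (m_1, …, m_h)). -/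
/-!
In an espalier every slice is a rectangle `I × J` that contains `(0, 0)` and, since it lies below
the bottom slice `P_0 ⊆ ℕ × ℕ`, has no negative coordinates. Hence the `i`-th slice is
`[0, a i) × [0, b i)` for unique positive integers `a i` and `b i`
(`IsEspalier.exists_slice_dims`). Stacking such rectangles yields a set closed under going down
exactly when `a` and `b` are both weakly decreasing, and the `i`-th slice has `a i * b i` cells.
So `(a, b) ↦ rectStack a b` is a bijection from the pairs of weakly decreasing tuples with product
`m` to the espaliers of multivolume `m`.
-/

/-- The `a`-th horizontal slice of a finite set of cells in `ℕ × ℤ × ℤ`. -/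
def polySlice (P : Finset (ℕ × ℤ × ℤ)) (a : ℕ) : Finset (ℤ × ℤ) :=
  (P.filter fun q => q.1 = a).image fun q => q.2

/-- A plateau: the product of two nonempty finite integer intervals. -/
def IsPlateau (S : Finset (ℤ × ℤ)) : Prop :=
  ∃ a b c d : ℤ, a ≤ b ∧ c ≤ d ∧ S = Finset.Icc a b ×ˢ Finset.Icc c d

/-- A pyramid of height `h`. -/
def IsPyramid (h : ℕ) (P : Finset (ℕ × ℤ × ℤ)) : Prop :=
  (∀ a : ℕ, (polySlice P a).Nonempty ↔ a < h) ∧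
  (∀ a : ℕ, a < h → IsPlateau (polySlice P a)) ∧
  (∀ (a : ℕ) (b c : ℤ), (a + 1, b, c) ∈ P → (a, b, c) ∈ P) ∧
  (∀ b c : ℤ, ((0 : ℕ), b, c) ∈ P → 0 ≤ b ∧ 0 ≤ c) ∧
  ((0 : ℕ), (0 : ℤ), (0 : ℤ)) ∈ P

/-- An espalier of height `h`: a pyramid all of whose plateaus contain `(0,0)`. -/
def IsEspalier (h : ℕ) (P : Finset (ℕ × ℤ × ℤ)) : Prop :=
  IsPyramid h P ∧ ∀ a : ℕ, a < h → (a, (0 : ℤ), (0 : ℤ)) ∈ P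

/-- The stack whose slice at height `i < h` is the rectangle `[0, a i) × [0, b i)`. -/
noncomputable def rectStack {h : ℕ} (a b : Fin h → ℕ+) : Finset (ℕ × ℤ × ℤ) :=
  Finset.univ.biUnion fun i : Fin h =>
    (Finset.Ico (0 : ℤ) (a i : ℕ) ×ˢ Finset.Ico (0 : ℤ) (b i : ℕ)).image fun q => ((i : ℕ), q)

theorem mem_rectStack {h : ℕ} (a b : Fin h → ℕ+) (k : ℕ) (x y : ℤ) :
    (k, x, y) ∈ rectStack a b ↔ ∃ i : Fin h, (i : ℕ) = k ∧
      (0 ≤ x ∧ x < (a i : ℕ)) ∧ (0 ≤ y ∧ y < (b i : ℕ)) := by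
  simp only [rectStack, Finset.mem_biUnion, Finset.mem_univ, true_and, Finset.mem_image,
    Finset.mem_product, Finset.mem_Ico, Prod.mk.injEq, Prod.exists]
  constructor
  · rintro ⟨i, x', y', hxy, hk, rfl, rfl⟩
    exact ⟨i, hk, hxy⟩
  · rintro ⟨i, hk, hxy⟩
    exact ⟨i, x, y, hxy, hk, rfl, rfl⟩

theorem mem_rectStack_fin {h : ℕ} (a b : Fin h → ℕ+) (i : Fin h) (x y : ℤ) :
    ((i : ℕ), x, y) ∈ rectStack a b ↔
      (0 ≤ x ∧ x < (a i : ℕ)) ∧ (0 ≤ y ∧ y < (b i : ℕ)) := by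
  rw [mem_rectStack]
  constructor
  · rintro ⟨j, hj, hxy⟩
    obtain rfl := Fin.ext hj
    exact hxy
  · intro hxy
    exact ⟨i, rfl, hxy⟩

theorem mem_polySlice (P : Finset (ℕ × ℤ × ℤ)) (k : ℕ) (x y : ℤ) :
    (x, y) ∈ polySlice P k ↔ (k, x, y) ∈ P := by
  simp [polySlice]

theorem polySlice_rectStack {h : ℕ} (a b : Fin h → ℕ+) (i : Fin h) :
    polySlice (rectStack a b) i =
      Finset.Ico (0 : ℤ) (a i : ℕ) ×ˢ Finset.Ico (0 : ℤ) (b i : ℕ) := by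
  ext ⟨x, y⟩
  rw [mem_polySlice, mem_rectStack_fin]
  simp

theorem card_polySlice_rectStack {h : ℕ} (a b : Fin h → ℕ+) (i : Fin h) :
    (polySlice (rectStack a b) i).card = (a i : ℕ) * b i := by
  simp [polySlice_rectStack]

theorem isEspalier_rectStack {h : ℕ} (hh : 1 ≤ h) {a b : Fin h → ℕ+} (ha : Antitone a)
    (hb : Antitone b) : IsEspalier h (rectStack a b) := by
  have hz : ∀ k : ℕ, k < h → (k, (0 : ℤ), (0 : ℤ)) ∈ rectStack a b := fun k hk =>
    (mem_rectStack_fin a b ⟨k, hk⟩ 0 0).2 (by simp)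
  refine ⟨⟨fun k => ⟨?_, fun hk => ⟨(0, 0), (mem_polySlice _ _ _ _).2 (hz k hk)⟩⟩,
    fun k hk => ?_, fun k x y hk => ?_, fun x y h0 => ?_, hz 0 hh⟩, hz⟩
  · rintro ⟨⟨x, y⟩, hxy⟩
    obtain ⟨i, rfl, -⟩ := (mem_rectStack _ _ _ _ _).1 ((mem_polySlice _ _ _ _).1 hxy)
    exact i.2
  · have h1 := (a ⟨k, hk⟩).pos
    have h2 := (b ⟨k, hk⟩).pos
    refine ⟨0, (a ⟨k, hk⟩ : ℕ) - 1, 0, (b ⟨k, hk⟩ : ℕ) - 1, by omega, by omega, ?_⟩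
    have := polySlice_rectStack a b ⟨k, hk⟩
    simp only at this
    rw [this]
    ext ⟨x, y⟩
    simp only [Finset.mem_product, Finset.mem_Ico, Finset.mem_Icc]
    omega
  · obtain ⟨i, hi, hx, hy⟩ := (mem_rectStack _ _ _ _ _).1 hk
    have hk' : k < h := by omega
    have hle : (⟨k, hk'⟩ : Fin h) ≤ i := by
      rw [Fin.le_def]
      simp only
      omega
    have h1 : (a i : ℕ) ≤ a ⟨k, hk'⟩ := ha hle
    have h2 : (b i : ℕ) ≤ b ⟨k, hk'⟩ := hb hle
    exact (mem_rectStack_fin a b ⟨k, hk'⟩ x y).2 (by omega)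
  · obtain ⟨i, -, hx, hy⟩ := (mem_rectStack _ _ _ _ _).1 h0
    exact ⟨hx.1, hy.1⟩

theorem IsPyramid.mem_of_le {h : ℕ} {P : Finset (ℕ × ℤ × ℤ)} (hP : IsPyramid h P) {k l : ℕ}
    (hkl : k ≤ l) {x y : ℤ} (hl : (l, x, y) ∈ P) : (k, x, y) ∈ P := by
  induction l, hkl using Nat.le_induction with
  | base => exact hl
  | succ n _ ih => exact ih (hP.2.2.1 n x y hl)

/-- Each slice of an espalier is a rectangle with lower corner `(0, 0)`: it contains `(0, 0)`, and
it has no negative coordinates because the bottom slice has none. -/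
theorem IsEspalier.exists_slice_dims {h : ℕ} {P : Finset (ℕ × ℤ × ℤ)} (hP : IsEspalier h P)
    (i : Fin h) : ∃ a b : ℕ+, ∀ x y : ℤ, ((i : ℕ), x, y) ∈ P ↔
      (0 ≤ x ∧ x < (a : ℕ)) ∧ (0 ≤ y ∧ y < (b : ℕ)) := by
  obtain ⟨p, q, r, s, hpq, hrs, hS⟩ := hP.1.2.1 i i.2
  have hmem : ∀ x y : ℤ, ((i : ℕ), x, y) ∈ P ↔ (p ≤ x ∧ x ≤ q) ∧ (r ≤ y ∧ y ≤ s) := by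
    intro x y
    rw [← mem_polySlice, hS]
    simp
  have h0 := (hmem 0 0).1 (hP.2 i i.2)
  have h1 := hP.1.2.2.2.1 p r
    (hP.1.mem_of_le (Nat.zero_le i) ((hmem p r).2 ⟨⟨le_rfl, hpq⟩, le_rfl, hrs⟩))
  refine ⟨⟨(q + 1).toNat, by omega⟩, ⟨(s + 1).toNat, by omega⟩, fun x y => ?_⟩
  rw [hmem]
  simp only [PNat.mk_coe]
  omega

theorem IsEspalier.exists_eq_rectStack {h : ℕ} {P : Finset (ℕ × ℤ × ℤ)} (hP : IsEspalier h P) :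
    ∃ a b : Fin h → ℕ+, Antitone a ∧ Antitone b ∧ rectStack a b = P := by
  choose a b hab using hP.exists_slice_dims
  refine ⟨a, b, fun i j hij => ?_, fun i j hij => ?_, ?_⟩
  -- The extreme cell of the upper slice also lies in the lower one.
  · have h1 := (a j).pos
    have h2 := (hab i ((a j : ℕ) - 1) 0).1
      (hP.1.mem_of_le hij ((hab j _ _).2 (by have := (b j).pos; omega)))
    have h3 : (a j : ℕ) ≤ a i := by omega
    exact h3
  · have h1 := (b j).pos
    have h2 := (hab i 0 ((b j : ℕ) - 1)).1
      (hP.1.mem_of_le hij ((hab j _ _).2 (by have := (a j).pos; omega)))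
    have h3 : (b j : ℕ) ≤ b i := by omega
    exact h3
  · ext ⟨k, x, y⟩
    constructor
    · intro hk
      obtain ⟨i, rfl, hxy⟩ := (mem_rectStack _ _ _ _ _).1 hk
      exact (hab i x y).2 hxy
    · intro hk
      have hkh : k < h := (hP.1.1 k).1 ⟨(x, y), (mem_polySlice _ _ _ _).2 hk⟩
      exact (mem_rectStack_fin a b ⟨k, hkh⟩ x y).2 ((hab ⟨k, hkh⟩ x y).1 hk)

theorem le_of_rectStack_eq {h : ℕ} {a b a' b' : Fin h → ℕ+}
    (he : rectStack a b = rectStack a' b') (i : Fin h) : a i ≤ a' i ∧ b i ≤ b' i := by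
  have h1 := (a i).pos
  have h2 := (b i).pos
  have hc : ((i : ℕ), ((a i : ℕ) : ℤ) - 1, ((b i : ℕ) : ℤ) - 1) ∈ rectStack a b :=
    (mem_rectStack_fin _ _ _ _ _).2 (by omega)
  rw [he, mem_rectStack_fin] at hc
  have h3 : (a i : ℕ) ≤ a' i := by omega
  have h4 : (b i : ℕ) ≤ b' i := by omega
  exact ⟨h3, h4⟩

theorem card_espaliers_multivolume (h : ℕ) (hh : 1 ≤ h) (m : Fin h → ℕ+) (hm : Antitone m) :
    Nat.card {P : Finset (ℕ × ℤ × ℤ) //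
        IsEspalier h P ∧ ∀ i : Fin h, (polySlice P (i : ℕ)).card = (m i : ℕ)} =
    Nat.card {ab : (Fin h → ℕ+) × (Fin h → ℕ+) //
        Antitone ab.1 ∧ Antitone ab.2 ∧ ∀ i, ab.1 i * ab.2 i = m i} := by
  symm
  refine Nat.card_eq_of_bijective
    (fun ab => ⟨rectStack ab.1.1 ab.1.2, isEspalier_rectStack hh ab.2.1 ab.2.2.1, fun i => ?_⟩)
    ⟨?_, ?_⟩
  · rw [card_polySlice_rectStack, ← ab.2.2.2 i, PNat.mul_coe]
  · rintro ⟨⟨a, b⟩, hab⟩ ⟨⟨a', b'⟩, hab'⟩ he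
    have he' : rectStack a b = rectStack a' b' := congrArg Subtype.val he
    have h1 := le_of_rectStack_eq he'
    have h2 := le_of_rectStack_eq he'.symm
    obtain rfl : a = a' := funext fun i => le_antisymm (h1 i).1 (h2 i).1
    obtain rfl : b = b' := funext fun i => le_antisymm (h1 i).2 (h2 i).2
    rfl
  · rintro ⟨P, hP, hc⟩
    obtain ⟨a, b, ha, hb, rfl⟩ := hP.exists_eq_rectStack
    refine ⟨⟨(a, b), ha, hb, fun i => PNat.eq ?_⟩, rfl⟩
    rw [PNat.mul_coe, ← hc i, card_polySlice_rectStack]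
end

section
/- For every integer v ≥ 1 there exists a polynomial Q ∈ ℚ[X] of degree exactly ⌊log₂ v⌋ such that for every integer d ≥ 1, the number of (d+1)-espaliers of volume v equals Q(d). In particular the number of (d+1)-espaliers of volume v is, as a function of d, a polynomial of degree ⌊log₂ v⌋. -/
/-!
Every plateau of an espalier is a box `∏ i, [0, e i a]` with one corner at the origin, so a
`(d+1)`-espalier of volume `v` is the same thing as a height `h` together with `d` antitone
sequences `e i : ℕ → ℕ`, zero from index `h` on, with `∑ a < h, ∏ i, (e i a + 1) = v`
(`card_espaliers_eq_ncard_profiles`).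

A coordinate `i` with `e i = 0` contributes nothing to the volume and can be deleted. Sorting the
profiles by the set of coordinates in which they are nonzero gives
`#espaliers = ∑ k, (d choose k) * N k`, where `N k` counts the profiles in `k` coordinates
none of which is zero (`ncard_profiles`). The bottom layer of such a profile has at
least `2 ^ k` cells, so `N k = 0` for `2 ^ k > v`; for `2 ^ k ≤ v` a cube of side `2` topped by
a column of single cells shows `N k > 0`. Hence the sum is a polynomial in `d` whose degree is the
largest `k` with `2 ^ k ≤ v`, namely `Nat.log 2 v`.
-/

/-- The `a`-th horizontal slice of a finite set of cells in `ℕ × ℤ^d`. -/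
def polySliceD {d : ℕ} (P : Finset (ℕ × (Fin d → ℤ))) (a : ℕ) : Finset (Fin d → ℤ) :=
  (P.filter fun q => q.1 = a).image fun q => q.2

/-- A `d`-plateau: the product of `d` nonempty finite integer intervals. -/
def IsPlateauD {d : ℕ} (S : Finset (Fin d → ℤ)) : Prop :=
  ∃ lo hi : Fin d → ℤ, (∀ i, lo i ≤ hi i) ∧
    S = Fintype.piFinset fun i => Finset.Icc (lo i) (hi i)

/-- A `(d+1)`-pyramid of height `h`. -/
def IsPyramidD (d h : ℕ) (P : Finset (ℕ × (Fin d → ℤ))) : Prop :=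
  (∀ a : ℕ, (polySliceD P a).Nonempty ↔ a < h) ∧
  (∀ a : ℕ, a < h → IsPlateauD (polySliceD P a)) ∧
  (∀ (a : ℕ) (y : Fin d → ℤ), (a + 1, y) ∈ P → (a, y) ∈ P) ∧
  (∀ y : Fin d → ℤ, ((0 : ℕ), y) ∈ P → ∀ i, 0 ≤ y i) ∧
  ((0 : ℕ), fun _ : Fin d => (0 : ℤ)) ∈ P

/-- A `(d+1)`-pyramid (of some height `h ≥ 1`). -/
def IsDPyramid (d : ℕ) (P : Finset (ℕ × (Fin d → ℤ))) : Prop :=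
  ∃ h : ℕ, 1 ≤ h ∧ IsPyramidD d h P

/-- A `(d+1)`-espalier: a `(d+1)`-pyramid all of whose plateaus contain the origin. -/
def IsDEspalier (d : ℕ) (P : Finset (ℕ × (Fin d → ℤ))) : Prop :=
  ∃ h : ℕ, 1 ≤ h ∧ IsPyramidD d h P ∧
    ∀ a : ℕ, a < h → (a, fun _ : Fin d => (0 : ℤ)) ∈ P

open Finset

/-- Profiles of volume `v` over the coordinate set `ι`: pairs `(h, e)` encoding the stack of `h`
boxes `∏ i, [0, e i a]`, `a < h`. The values `e i a` with `h ≤ a` are normalised to `0`. -/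
def espalierProfiles (ι : Type) [Fintype ι] (v : ℕ) : Set (ℕ × (ι → ℕ → ℕ)) :=
  {x | (∀ i, Antitone (x.2 i)) ∧ (∀ i a, x.1 ≤ a → x.2 i a = 0) ∧
    ∑ a ∈ range x.1, ∏ i, (x.2 i a + 1) = v}

/-- Profiles in which every coordinate is used, that is, the bottom box has side at least `2` in
every direction. -/
def fullProfiles (ι : Type) [Fintype ι] (v : ℕ) : Set (ℕ × (ι → ℕ → ℕ)) :=
  {x | x ∈ espalierProfiles ι v ∧ ∀ i, x.2 i 0 ≠ 0}

lemma finite_espalierProfiles (ι : Type) [Fintype ι] (v : ℕ) :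
    (espalierProfiles ι v).Finite := by
  classical
  have key : ∀ x ∈ espalierProfiles ι v, x.1 ≤ v ∧ ∀ i a, x.2 i a ≤ v := by
    rintro ⟨h, e⟩ ⟨-, h2, h3⟩
    simp only at h2 h3
    constructor
    · calc h = ∑ a ∈ range h, 1 := by simp
        _ ≤ _ := sum_le_sum fun a _ => Nat.one_le_iff_ne_zero.2
          (prod_ne_zero_iff.2 fun i _ => Nat.succ_ne_zero _)
        _ = v := h3
    · intro i a
      by_cases ha : h ≤ a
      · simp [h2 i a ha]
      · have h4 : ∏ i, (e i a + 1) ≤ v := by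
          rw [← h3]
          exact single_le_sum (f := fun a => ∏ i, (e i a + 1)) (fun _ _ => Nat.zero_le _)
            (mem_range.2 (not_le.1 ha))
        have h5 : e i a + 1 ≤ ∏ i, (e i a + 1) :=
          single_le_prod' (f := fun i => e i a + 1) (fun _ _ => by simp) (mem_univ i)
        simp only
        omega
  refine Set.Finite.of_injOn
    (f := fun x => ((x.1, fun i a => x.2 i a) : ℕ × (ι → Fin v → ℕ)))
    (t := Set.Icc (0, fun _ _ => 0) (v, fun _ _ => v)) ?_ ?_ (Set.finite_Icc _ _)
  · intro x hx
    refine ⟨⟨Nat.zero_le _, fun i a => Nat.zero_le _⟩, ⟨(key x hx).1, fun i a => (key x hx).2 i a⟩⟩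
  · intro x hx y hy hxy
    simp only [Prod.mk.injEq] at hxy
    refine Prod.ext hxy.1 (funext fun i => funext fun a => ?_)
    by_cases ha : a < v
    · exact congrFun (congrFun hxy.2 i) ⟨a, ha⟩
    · rw [hx.2.1 i a ((key x hx).1.trans (not_lt.1 ha)),
        hy.2.1 i a ((key y hy).1.trans (not_lt.1 ha))]

/-- Deleting the unused coordinates: profiles whose set of used coordinates is the image of an
injection `φ : κ → ι` correspond to full profiles over `κ`. -/
lemma ncard_profiles_support {ι κ : Type} [Fintype ι] [Fintype κ] (v : ℕ) (φ : κ → ι)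
    (hφ : Function.Injective φ) :
    {x | x ∈ espalierProfiles ι v ∧ ∀ i, x.2 i 0 ≠ 0 ↔ i ∈ Set.range φ}.ncard =
      (fullProfiles κ v).ncard := by
  have hz : ∀ x ∈ espalierProfiles ι v, ∀ i, x.2 i 0 = 0 → ∀ a, x.2 i a = 0 := fun x hx i hi a =>
    Nat.le_zero.1 (hi ▸ hx.1 i (Nat.zero_le a))
  apply Set.BijOn.ncard_eq (f := fun x => (x.1, fun j => x.2 (φ j)))
  refine ⟨?_, ?_, ?_⟩
  · rintro x ⟨hx, hs⟩
    refine ⟨⟨fun j => hx.1 _, fun j => hx.2.1 _, ?_⟩, fun j => (hs _).2 ⟨j, rfl⟩⟩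
    rw [← hx.2.2]
    refine sum_congr rfl fun a _ => ?_
    refine Fintype.prod_of_injective φ hφ _ _ (fun i hi => ?_) fun _ => rfl
    rw [hz x hx i (by_contra fun h => hi ((hs i).1 h)) a, zero_add]
  · rintro x ⟨hx, hsx⟩ y ⟨hy, hsy⟩ hxy
    simp only [Prod.mk.injEq] at hxy
    refine Prod.ext hxy.1 (funext fun i => ?_)
    by_cases hi : i ∈ Set.range φ
    · obtain ⟨j, rfl⟩ := hi
      exact congrFun hxy.2 j
    · funext a
      rw [hz x hx i (by_contra fun h => hi ((hsx i).1 h)) a,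
        hz y hy i (by_contra fun h => hi ((hsy i).1 h)) a]
  · rintro ⟨h, e⟩ ⟨⟨h1, h2, h3⟩, h4⟩
    simp only at h1 h2 h3 h4
    have hin : ∀ j, Function.extend φ e (0 : ι → ℕ → ℕ) (φ j) = e j :=
      hφ.extend_apply e (0 : ι → ℕ → ℕ)
    have hout : ∀ i, i ∉ Set.range φ → Function.extend φ e (0 : ι → ℕ → ℕ) i = 0 :=
      fun i hi => Function.extend_apply' e (0 : ι → ℕ → ℕ) i hi
    refine ⟨(h, Function.extend φ e (0 : ι → ℕ → ℕ)),
      ⟨⟨fun i => ?_, fun i => ?_, ?_⟩, fun i => ?_⟩, ?_⟩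
    · by_cases hi : i ∈ Set.range φ
      · obtain ⟨j, rfl⟩ := hi
        simpa only [hin] using h1 j
      · simp only [hout i hi]
        exact fun _ _ _ => le_rfl
    · by_cases hi : i ∈ Set.range φ
      · obtain ⟨j, rfl⟩ := hi
        simpa only [hin] using h2 j
      · simp [hout i hi]
    · rw [← h3]
      refine sum_congr rfl fun a _ => ?_
      symm
      refine Fintype.prod_of_injective φ hφ _ _ (fun i hi => ?_) fun j => ?_
      · simp [hout i hi]
      · simp [hin]
    · by_cases hi : i ∈ Set.range φ
      · obtain ⟨j, rfl⟩ := hi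
        simpa [hin] using h4 j
      · simp only [hout i hi, hi]
        simp
    · simp [hin]

lemma ncard_profiles (d v : ℕ) :
    (espalierProfiles (Fin d) v).ncard =
      ∑ k ∈ range (d + 1), d.choose k * (fullProfiles (Fin k) v).ncard := by
  classical
  have hfin := finite_espalierProfiles (Fin d) v
  rw [Set.ncard_eq_toFinset_card _ hfin,
    card_eq_sum_card_fiberwise (f := fun x => univ.filter fun i => x.2 i 0 ≠ 0)
      (t := (univ : Finset (Fin d)).powerset) (fun x _ => by simp)]
  have h := sum_powerset_apply_card (fun k => (fullProfiles (Fin k) v).ncard)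
    (x := (univ : Finset (Fin d)))
  simp only [card_univ, Fintype.card_fin, smul_eq_mul] at h
  rw [← h]
  refine sum_congr rfl fun S _ => ?_
  rw [← ncard_profiles_support v (S.orderEmbOfFin rfl) (S.orderEmbOfFin rfl).injective,
    ← Set.ncard_coe_finset]
  congr 1
  ext x
  simp only [coe_filter, Set.Finite.mem_toFinset, Set.mem_ofPred_eq, range_orderEmbOfFin, mem_coe,
    Finset.ext_iff, mem_filter, mem_univ, true_and]

lemma ncard_fullProfiles_eq_zero {k v : ℕ} (hv : 1 ≤ v) (h : v < 2 ^ k) :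
    (fullProfiles (Fin k) v).ncard = 0 := by
  suffices hemp : fullProfiles (Fin k) v = ∅ by rw [hemp, Set.ncard_empty]
  rw [Set.eq_empty_iff_forall_notMem]
  rintro ⟨n, e⟩ ⟨⟨-, -, h3⟩, h4⟩
  simp only at h3 h4
  have hn : 0 < n := by
    rcases Nat.eq_zero_or_pos n with rfl | hn
    · simp at h3
      omega
    · exact hn
  have h5 : ∏ i, (e i 0 + 1) ≤ v := by
    rw [← h3]
    exact single_le_sum (f := fun a => ∏ i, (e i a + 1)) (fun _ _ => Nat.zero_le _)
      (mem_range.2 hn)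
  have h6 : 2 ^ k ≤ ∏ i, (e i 0 + 1) := by
    calc 2 ^ k = ∏ _i : Fin k, 2 := by simp
      _ ≤ _ := prod_le_prod' fun i _ => by have := h4 i; omega
  omega

lemma ncard_fullProfiles_pos {k v : ℕ} (h : 2 ^ k ≤ v) :
    0 < (fullProfiles (Fin k) v).ncard := by
  rw [Set.ncard_pos ((finite_espalierProfiles _ v).subset fun x hx => hx.1)]
  -- A cube of side `2` topped by `v - 2 ^ k` single cells.
  refine ⟨(v - 2 ^ k + 1, fun _ a => if a = 0 then 1 else 0), ⟨fun i a b hab => ?_,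
    fun i a ha => ?_, ?_⟩, fun i => by simp⟩
  · dsimp only
    split_ifs <;> omega
  · simp only at ha ⊢
    rw [if_neg (by omega)]
  · simp only
    rw [sum_range_succ']
    simp
    omega

/-- The set of cells encoded by a profile. -/
noncomputable def profileCells {d : ℕ} (x : ℕ × (Fin d → ℕ → ℕ)) : Finset (ℕ × (Fin d → ℤ)) :=
  (range x.1).biUnion fun a =>
    (Fintype.piFinset fun i => Icc (0 : ℤ) (x.2 i a)).image (Prod.mk a)

lemma mem_profileCells {d : ℕ} (x : ℕ × (Fin d → ℕ → ℕ)) (a : ℕ) (y : Fin d → ℤ) :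
    (a, y) ∈ profileCells x ↔ a < x.1 ∧ ∀ i, 0 ≤ y i ∧ y i ≤ x.2 i a := by
  simp only [profileCells, mem_biUnion, mem_range, mem_image, Fintype.mem_piFinset, mem_Icc,
    Prod.mk.injEq]
  constructor
  · rintro ⟨b, hb, z, hz, rfl, rfl⟩
    exact ⟨hb, hz⟩
  · rintro ⟨ha, hy⟩
    exact ⟨a, ha, y, hy, rfl, rfl⟩

lemma card_profileCells {d : ℕ} (x : ℕ × (Fin d → ℕ → ℕ)) :
    (profileCells x).card = ∑ a ∈ range x.1, ∏ i, (x.2 i a + 1) := by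
  rw [profileCells, card_biUnion]
  · refine sum_congr rfl fun a _ => ?_
    rw [card_image_of_injective _ (Prod.mk_right_injective a), Fintype.card_piFinset]
    refine prod_congr rfl fun i _ => ?_
    rw [Int.card_Icc]
    omega
  · intro a _ b _ hab
    rw [Function.onFun, disjoint_left]
    intro q hqa hqb
    simp only [mem_image] at hqa hqb
    obtain ⟨_, _, rfl⟩ := hqa
    obtain ⟨_, _, h⟩ := hqb
    exact hab (congrArg Prod.fst h).symm

lemma mem_polySliceD {d : ℕ} (P : Finset (ℕ × (Fin d → ℤ))) (a : ℕ) (y : Fin d → ℤ) :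
    y ∈ polySliceD P a ↔ (a, y) ∈ P := by
  simp only [polySliceD, mem_image, mem_filter]
  constructor
  · rintro ⟨⟨b, z⟩, ⟨h, rfl⟩, rfl⟩
    exact h
  · intro h
    exact ⟨(a, y), ⟨h, rfl⟩, rfl⟩

lemma isDEspalier_profileCells {d v : ℕ} (hv : 1 ≤ v) {x : ℕ × (Fin d → ℕ → ℕ)}
    (hx : x ∈ espalierProfiles (Fin d) v) : IsDEspalier d (profileCells x) := by
  have horig : ∀ a, a < x.1 → (a, fun _ : Fin d => (0 : ℤ)) ∈ profileCells x := fun a ha =>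
    (mem_profileCells x a _).2 ⟨ha, fun i => ⟨le_rfl, by positivity⟩⟩
  have hpos : 1 ≤ x.1 := by
    by_contra h
    have h3 := hx.2.2
    rw [show x.1 = 0 by omega] at h3
    simp at h3
    omega
  refine ⟨x.1, hpos, ⟨fun a => ⟨?_, fun ha => ?_⟩, fun a ha => ?_, fun a y hy => ?_,
    fun y hy i => ?_, horig 0 hpos⟩, horig⟩
  · rintro ⟨y, hy⟩
    exact ((mem_profileCells x a y).1 ((mem_polySliceD _ a y).1 hy)).1
  · exact ⟨_, (mem_polySliceD _ a _).2 (horig a ha)⟩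
  · refine ⟨fun _ => 0, fun i => x.2 i a, fun i => by positivity, ?_⟩
    ext y
    simp [mem_polySliceD, mem_profileCells, ha]
  · rw [mem_profileCells] at hy ⊢
    refine ⟨by omega, fun i => ⟨(hy.2 i).1, (hy.2 i).2.trans ?_⟩⟩
    exact_mod_cast hx.1 i (Nat.le_succ a)
  · exact (((mem_profileCells x 0 y).1 hy).2 i).1

lemma profileCells_injOn (d v : ℕ) : Set.InjOn profileCells (espalierProfiles (Fin d) v) := by
  -- The height is read off the axis over the origin, and `e i a` off the `i`-th axis of layer `a`.
  have hle : ∀ x y : ℕ × (Fin d → ℕ → ℕ), profileCells x = profileCells y →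
      x.1 ≤ y.1 ∧ ∀ i a, a < x.1 → x.2 i a ≤ y.2 i a := by
    intro x y hxy
    constructor
    · by_contra! h
      have h1 : (y.1, fun _ : Fin d => (0 : ℤ)) ∈ profileCells x :=
        (mem_profileCells x _ _).2 ⟨h, fun i => ⟨le_rfl, by positivity⟩⟩
      rw [hxy, mem_profileCells] at h1
      exact lt_irrefl _ h1.1
    · intro i a ha
      have h1 : (a, fun j : Fin d => if j = i then (x.2 i a : ℤ) else 0) ∈ profileCells x := by
        refine (mem_profileCells x _ _).2 ⟨ha, fun j => ?_⟩
        split_ifs with hj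
        · subst hj
          exact ⟨by positivity, le_rfl⟩
        · exact ⟨le_rfl, by positivity⟩
      rw [hxy, mem_profileCells] at h1
      have h2 := (h1.2 i).2
      rw [if_pos rfl] at h2
      exact_mod_cast h2
  intro x hx y hy hxy
  have h1 := hle x y hxy
  have h2 := hle y x hxy.symm
  have hh : x.1 = y.1 := le_antisymm h1.1 h2.1
  refine Prod.ext hh (funext fun i => funext fun a => ?_)
  by_cases ha : a < x.1
  · exact le_antisymm (h1.2 i a ha) (h2.2 i a (hh ▸ ha))
  · rw [hx.2.1 i a (not_lt.1 ha), hy.2.1 i a (hh ▸ not_lt.1 ha)]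

lemma exists_profile_of_isDEspalier {d : ℕ} {P : Finset (ℕ × (Fin d → ℤ))}
    (hP : IsDEspalier d P) :
    ∃ x ∈ espalierProfiles (Fin d) P.card, profileCells x = P := by
  classical
  obtain ⟨h, -, ⟨hne, hplat, hdown, hnonneg, -⟩, horig⟩ := hP
  have hlow : ∀ a y, (a, y) ∈ P → (0, y) ∈ P := by
    intro a y
    induction a with
    | zero => exact id
    | succ a ih => exact fun hy => ih (hdown a y hy)
  -- The lower corner is nonnegative since it lies in the bottom layer, and nonpositive since the
  -- plateau contains the origin.
  have hbox : ∀ a, ∃ m : Fin d → ℕ, a < h →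
      ∀ y, (a, y) ∈ P ↔ ∀ i, 0 ≤ y i ∧ y i ≤ m i := by
    intro a
    by_cases ha : a < h
    · obtain ⟨lo, hi, hlh, hS⟩ := hplat a ha
      have hmem : ∀ y, (a, y) ∈ P ↔ ∀ i, lo i ≤ y i ∧ y i ≤ hi i := by
        intro y
        rw [← mem_polySliceD, hS]
        simp
      have h0 := (hmem _).1 (horig a ha)
      have hlo : ∀ i, lo i = 0 := fun i => le_antisymm (h0 i).1
        (hnonneg lo (hlow a lo ((hmem lo).2 fun i => ⟨le_rfl, hlh i⟩)) i)
      refine ⟨fun i => (hi i).toNat, fun _ y => ?_⟩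
      rw [hmem]
      refine forall_congr' fun i => ?_
      rw [hlo i, Int.toNat_of_nonneg (h0 i).2]
    · exact ⟨fun _ => 0, fun ha' => absurd ha' ha⟩
  choose m hm using hbox
  have hlt : ∀ a y, (a, y) ∈ P → a < h := fun a y hy =>
    (hne a).1 ⟨y, (mem_polySliceD P a y).2 hy⟩
  let x : ℕ × (Fin d → ℕ → ℕ) := (h, fun i a => if a < h then m a i else 0)
  have hxP : profileCells x = P := by
    ext ⟨a, y⟩
    rw [mem_profileCells]
    constructor
    · rintro ⟨ha, hy⟩
      have ha' : a < h := ha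
      rw [hm a ha']
      simpa [x, ha'] using hy
    · intro hy
      have ha := hlt a y hy
      refine ⟨ha, ?_⟩
      simpa [x, ha] using (hm a ha y).1 hy
  refine ⟨x, ⟨fun i => antitone_nat_of_succ_le fun a => ?_, fun i a ha => ?_, ?_⟩, hxP⟩
  · by_cases ha : a + 1 < h
    · have ha' : a < h := by omega
      have h1 : (a + 1, fun j => (m (a + 1) j : ℤ)) ∈ P :=
        (hm _ ha _).2 fun j => ⟨by positivity, le_rfl⟩
      have h2 := (((hm a ha' _).1 (hdown _ _ h1)) i).2
      simpa [x, ha, ha'] using h2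
    · simp [x, ha]
  · exact if_neg (not_lt.2 ha)
  · rw [← card_profileCells, hxP]

lemma card_espaliers_eq_ncard_profiles (d v : ℕ) (hv : 1 ≤ v) :
    Nat.card {P : Finset (ℕ × (Fin d → ℤ)) // IsDEspalier d P ∧ P.card = v} =
      (espalierProfiles (Fin d) v).ncard := by
  change Nat.card {P : Finset (ℕ × (Fin d → ℤ)) | IsDEspalier d P ∧ P.card = v} = _
  rw [Nat.card_coe_set_eq]
  symm
  refine Set.BijOn.ncard_eq (f := profileCells) ⟨fun x hx => ⟨isDEspalier_profileCells hv hx, ?_⟩,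
    profileCells_injOn d v, ?_⟩
  · rw [card_profileCells, hx.2.2]
  · rintro P ⟨hP, rfl⟩
    exact exists_profile_of_isDEspalier hP

theorem card_espaliers_volume_polynomial_in_dim (v : ℕ) (hv : 1 ≤ v) :
    ∃ Q : Polynomial ℚ, Q ≠ 0 ∧ Q.natDegree = Nat.log 2 v ∧
      ∀ d : ℕ, 1 ≤ d →
        (Nat.card {P : Finset (ℕ × (Fin d → ℤ)) // IsDEspalier d P ∧ P.card = v} : ℚ) =
          Q.eval (d : ℚ) := by
  set L := Nat.log 2 v with hL
  set N : ℕ → ℕ := fun k => (fullProfiles (Fin k) v).ncard with hN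
  have hNzero : ∀ k, L < k → N k = 0 := fun k hk =>
    ncard_fullProfiles_eq_zero hv (Nat.lt_pow_of_log_lt one_lt_two hk)
  have hNpos : 0 < N L := ncard_fullProfiles_pos (Nat.pow_log_le_self 2 (by omega))
  -- `descPochhammer ℚ k / k!` is the binomial coefficient `X choose k`.
  set T : ℕ → Polynomial ℚ := fun k =>
    Polynomial.C ((N k : ℚ) / k.factorial) * descPochhammer ℚ k with hT
  have hTdeg : ∀ k, (T k).natDegree ≤ k := fun k =>
    (Polynomial.natDegree_C_mul_le _ _).trans (descPochhammer_natDegree ℚ k).le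
  have hTeval : ∀ k d : ℕ, (T k).eval (d : ℚ) = d.choose k * N k := by
    intro k d
    have hk : (k.factorial : ℚ) ≠ 0 := by exact_mod_cast k.factorial_ne_zero
    simp only [hT, Polynomial.eval_mul, Polynomial.eval_C, descPochhammer_eval_eq_descFactorial,
      Nat.descFactorial_eq_factorial_mul_choose, Nat.cast_mul]
    field_simp
  have hcoeff : (∑ k ∈ range (L + 1), T k).coeff L ≠ 0 := by
    rw [Polynomial.finsetSum_coeff, sum_range_succ, sum_eq_zero, zero_add]
    · have h1 : (descPochhammer ℚ L).coeff L = 1 := by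
        have h2 := (monic_descPochhammer ℚ L).coeff_natDegree
        rwa [descPochhammer_natDegree] at h2
      simp only [hT, Polynomial.coeff_C_mul, h1, mul_one]
      exact div_ne_zero (by exact_mod_cast hNpos.ne') (by exact_mod_cast L.factorial_ne_zero)
    · intro k hk
      exact Polynomial.coeff_eq_zero_of_natDegree_lt ((hTdeg k).trans_lt (mem_range.1 hk))
  refine ⟨∑ k ∈ range (L + 1), T k, fun h => hcoeff (by simp [h]),
    Polynomial.natDegree_eq_of_le_of_coeff_ne_zero
      (Polynomial.natDegree_sum_le_of_forall_le _ _ fun k hk =>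
        (hTdeg k).trans (Nat.lt_succ_iff.1 (mem_range.1 hk))) hcoeff, fun d _ => ?_⟩
  rw [card_espaliers_eq_ncard_profiles d v hv, ncard_profiles, Polynomial.eval_finsetSum]
  simp only [hTeval]
  push_cast
  -- Both sums equal the one over `k ≤ max d L`: the extra terms vanish because of the binomial
  -- coefficient when `k > d` and because of `N k` when `k > L`.
  trans ∑ k ∈ range (max d L + 1), (d.choose k : ℚ) * N k
  · refine sum_subset (range_subset_range.2 (by omega)) fun k _ hk => ?_
    rw [mem_range] at hk
    simp [Nat.choose_eq_zero_of_lt (show d < k by omega)]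
  · symm
    refine sum_subset (range_subset_range.2 (by omega)) fun k _ hk => ?_
    rw [mem_range] at hk
    simp [hNzero k (by omega)]
end
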